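/- Let Γ be a finite extensive-form game with perfect recall. A behavioral strategy profile β* is a subgame perfect equilibrium in behavioral strategies if and only if there exist a behavioral strategy profile β̃* and a belief system μ* such that: (i) β*^i_{I_i^j}(a') = 0 for all i ∈ N, j ∈ M_i and a', a'' ∈ A(I_i^j) with C^i_{I_i^j}(I_i^j|β*) > 0 and u^i(a'', ϱ^i_{I_i^j}(β*^{-I_i^j}, β̃*), μ* | I_i^j) > u^i(a', ϱ^i_{I_i^j}(β*^{-I_i^j}, β̃*), μ* | I_i^j); (ii) β̃*^i_{I_i^j}(a') = 0 for all i, j and a', a'' ∈ A(I_i^j) with u^i(a'', ϱ^i_{I_i^j}(β*^{-I_i^j}, β̃*), μ* | I_i^j) > u^i(a', ϱ^i_{I_i^j}(β*^{-I_i^j}, β̃*), μ* | I_i^j); and (iii) Y^i(I_i^j|β*) μ*^i_{I_i^j}(h) = Y^i(h|β*) for all i, j, h ∈ I_i^j. -/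

import Mathlib

open scoped Classical

noncomputable section

/-- A finite extensive-form game.  Actions are labelled by natural numbers drawn from the
finite pool `actFinset`; a history is the list of actions taken so far; players are `Fin n`
and `P h = none` means that the chance player moves after `h`.  The information sets of
player `i` are `Info i j` for `j < m i`, and `infoIdx h` is the index of the information
set containing a nonterminal history `h` at which some player moves.  Payoffs `u i h` are
relevant on terminal histories. -/
structure EFG where
  n : ℕ
  actFinset : Finset ℕ
  H : Finset (List ℕ)
  P : List ℕ → Option (Fin n)
  fc : List ℕ → ℕ → ℝ
  m : Fin n → ℕ
  Info : Fin n → ℕ → Finset (List ℕ)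
  infoIdx : List ℕ → ℕ
  u : Fin n → List ℕ → ℝ
  empty_mem : ([] : List ℕ) ∈ H
  prefixClosed : ∀ h ∈ H, ∀ h' : List ℕ, h' <+: h → h' ∈ H
  act_mem : ∀ (h : List ℕ) (a : ℕ), h ++ [a] ∈ H → a ∈ actFinset
  fc_nonneg : ∀ h a, 0 ≤ fc h a
  fc_sum : ∀ h ∈ H, P h = none → (∃ a, h ++ [a] ∈ H) →
    ∑ a ∈ actFinset.filter (fun a => h ++ [a] ∈ H), fc h a = 1
  info_spec : ∀ (i : Fin n) (j : ℕ) (h : List ℕ), j < m i →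
    (h ∈ Info i j ↔ h ∈ H ∧ P h = some i ∧ (∃ a, h ++ [a] ∈ H) ∧ infoIdx h = j)
  infoIdx_lt : ∀ (i : Fin n), ∀ h ∈ H, P h = some i → (∃ a, h ++ [a] ∈ H) → infoIdx h < m i
  info_nonempty : ∀ (i : Fin n) (j : ℕ), j < m i → (Info i j).Nonempty
  info_actions : ∀ (i : Fin n) (j : ℕ), j < m i → ∀ h ∈ Info i j, ∀ h' ∈ Info i j,
    ∀ a : ℕ, (h ++ [a] ∈ H ↔ h' ++ [a] ∈ H)
  act_unique : ∀ (h h' : List ℕ) (a : ℕ), h ∈ H → h' ∈ H → h ++ [a] ∈ H → h' ++ [a] ∈ H →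
    P h = P h' ∧ infoIdx h = infoIdx h'

namespace EFG

/-- Behavioral strategy profiles (player, information-set index, action ↦ probability). -/
abbrev Profile (G : EFG) : Type := Fin G.n → ℕ → ℕ → ℝ

/-- Belief systems (player, information-set index, history ↦ probability). -/
abbrev Belief (G : EFG) : Type := Fin G.n → ℕ → List ℕ → ℝ

variable (G : EFG)

/-- The set `Z` of terminal histories. -/
def Zset : Finset (List ℕ) := G.H.filter fun h => ∀ a : ℕ, h ++ [a] ∉ G.H

/-- The set `A(h)` of actions available after a history. -/
def A (h : List ℕ) : Finset ℕ := G.actFinset.filter fun a => h ++ [a] ∈ G.H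

/-- The common action set `A(I_i^j)` of an information set. -/
def infoA (i : Fin G.n) (j : ℕ) : Finset ℕ := (G.Info i j).sup fun h => G.A h

/-- A behavioral strategy of player `i`: a probability distribution on `A(I_i^j)` for
each information set `I_i^j`. -/
def IsBehStrategy (i : Fin G.n) (b : ℕ → ℕ → ℝ) : Prop :=
  ∀ j < G.m i, (∀ a ∈ G.infoA i j, 0 ≤ b j a) ∧ ∑ a ∈ G.infoA i j, b j a = 1

/-- A behavioral strategy profile. -/
def IsBehProfile (β : G.Profile) : Prop := ∀ i : Fin G.n, G.IsBehStrategy i (β i)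

/-- The probability of action `a` at history `h`: the chance distribution if the chance
player moves, and the mover's behavioral strategy otherwise. -/
def moveProb (β : G.Profile) (h : List ℕ) (a : ℕ) : ℝ :=
  (G.P h).elim (G.fc h a) fun i => β i (G.infoIdx h) a

/-- Player `i`'s record `X_i` of the information sets he encounters along a history and the
actions he takes at them, accumulated starting from the prefix `pre`. -/
def recordFrom (i : Fin G.n) : List ℕ → List ℕ → List (ℕ × ℕ)
  | _, [] => []
  | pre, b :: rest =>
    (if G.P pre = some i then [(G.infoIdx pre, b)] else []) ++ recordFrom i (pre ++ [b]) rest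

/-- Perfect recall. -/
def PerfectRecall : Prop :=
  ∀ (i : Fin G.n) (j : ℕ), j < G.m i →
    ∀ h ∈ G.Info i j, ∀ h' ∈ G.Info i j, G.recordFrom i [] h = G.recordFrom i [] h'

/-- Product of the move probabilities along `rest`, continuing from the prefix `pre`. -/
def prodAlong (β : G.Profile) : List ℕ → List ℕ → ℝ
  | _, [] => 1
  | pre, b :: rest => G.moveProb β pre b * prodAlong β (pre ++ [b]) rest

/-- `ω(h|β)`: the probability that the moves along `h` are played under `β`. -/
def omega (β : G.Profile) (h : List ℕ) : ℝ := G.prodAlong β [] h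

/-- `ω(I_i^j|β)`. -/
def omegaInfo (i : Fin G.n) (j : ℕ) (β : G.Profile) : ℝ := ∑ h ∈ G.Info i j, G.omega β h

/-- Product of the move probabilities along `rest` from `pre`, disregarding player `i`'s
own moves. -/
def prodAlongNot (i : Fin G.n) (β : G.Profile) : List ℕ → List ℕ → ℝ
  | _, [] => 1
  | pre, b :: rest =>
    (if G.P pre = some i then 1 else G.moveProb β pre b) * prodAlongNot i β (pre ++ [b]) rest

/-- `S^i(h|β)`: probability of the moves along `h`, disregarding player `i`'s own moves. -/
def Sh (i : Fin G.n) (β : G.Profile) (h : List ℕ) : ℝ := G.prodAlongNot i β [] h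

/-- `S^i(I_i^j|β)`. -/
def SInfo (i : Fin G.n) (j : ℕ) (β : G.Profile) : ℝ := ∑ h ∈ G.Info i j, G.Sh i β h

/-- Product of the move probabilities along `rest` from `pre`, with the factor at prefixes
lying in `I_i^j` omitted. -/
def prodAlongSkip (i : Fin G.n) (j : ℕ) (β : G.Profile) : List ℕ → List ℕ → ℝ
  | _, [] => 1
  | pre, b :: rest =>
    (if pre ∈ G.Info i j then 1 else G.moveProb β pre b) * prodAlongSkip i j β (pre ++ [b]) rest

/-- `q ∈ M(a, I_i^j)`: `I_i^q` is a first information set of player `i` after action `a`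
(every history in `I_i^q` contains `a`, with no later action of `a` lying in any action set
of player `i`). -/
def FirstAfter (i : Fin G.n) (a : ℕ) (q : ℕ) : Prop :=
  q < G.m i ∧ ∀ h ∈ G.Info i q, ∃ l₁ l₂ : List ℕ,
    h = l₁ ++ a :: l₂ ∧ ∀ b ∈ l₂, ∀ p < G.m i, b ∉ G.infoA i p

/-- `q ∈ M(I_i^j) = ∪_{a ∈ A(I_i^j)} M(a, I_i^j)`. -/
def MInfo (i : Fin G.n) (j : ℕ) (q : ℕ) : Prop := ∃ a ∈ G.infoA i j, G.FirstAfter i a q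

/-- `q ∈ Λ(a, I_i^j)`: every history in `I_i^q` contains the action `a`. -/
def LambdaSet (i : Fin G.n) (a : ℕ) (q : ℕ) : Prop :=
  q < G.m i ∧ ∀ h ∈ G.Info i q, ∃ l₁ l₂ : List ℕ, h = l₁ ++ a :: l₂

/-- `ϱ^i_{I_i^j}(β, β̃)`: replace player `i`'s component of `β` by that of `β̃` at every
information set `I_i^q` such that some history in `I_i^q` contains an action of `A(I_i^j)`. -/
def rho (i : Fin G.n) (j : ℕ) (β βt : G.Profile) : G.Profile := fun p q =>
  if p = i ∧ ∃ h ∈ G.Info i q, ∃ b ∈ h, b ∈ G.infoA i j then βt i q else β p q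

/-- A belief system: a probability distribution on each information set. -/
def IsBelief (μ : G.Belief) : Prop :=
  ∀ (i : Fin G.n) (j : ℕ), j < G.m i →
    (∀ h ∈ G.Info i j, 0 ≤ μ i j h) ∧ ∑ h ∈ G.Info i j, μ i j h = 1

/-- A self-independent belief system for `β`:
`S^i(I_i^j|β) · μ^i_{I_i^j}(h) = S^i(h|β)`. -/
def SelfIndep (β : G.Profile) (μ : G.Belief) : Prop :=
  ∀ (i : Fin G.n) (j : ℕ), j < G.m i → ∀ h ∈ G.Info i j,
    G.SInfo i j β * μ i j h = G.Sh i β h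

/-- Auxiliary for `ν`: scan `rest` from `pre` for the subhistory lying in `I_i^j`, then
weight by the belief and multiply the move probabilities of the remaining moves (the move
taken at the subhistory itself being skipped). -/
def nuAux (i : Fin G.n) (j : ℕ) (β : G.Profile) (w : List ℕ → ℝ) : List ℕ → List ℕ → ℝ
  | _, [] => 0
  | pre, b :: rest =>
    if pre ∈ G.Info i j then w pre * G.prodAlong β (pre ++ [b]) rest
    else nuAux i j β w (pre ++ [b]) rest

/-- `ν^i_{I_i^j}(h | a, β^{-I_i^j}, μ)` (it does not involve the component of `β` at
`I_i^j`). -/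
def nu (i : Fin G.n) (j : ℕ) (β : G.Profile) (μ : G.Belief) (h : List ℕ) : ℝ :=
  G.nuAux i j β (μ i j) [] h

/-- `u^i((a, β^{-I_i^j}) ∧ I_i^j)`. -/
def uWedgeAct (i : Fin G.n) (j : ℕ) (a : ℕ) (β : G.Profile) : ℝ :=
  ∑ h ∈ G.Zset.filter (fun h => a ∈ h), G.u i h * G.prodAlongSkip i j β [] h

/-- `u^i(β ∧ I_i^j)`. -/
def uWedge (i : Fin G.n) (j : ℕ) (β : G.Profile) : ℝ :=
  ∑ h ∈ G.Zset.filter (fun h => ∃ b ∈ h, b ∈ G.infoA i j), G.u i h * G.omega β h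

/-- The conditional expected payoff `u^i(a, β^{-I_i^j}, μ | I_i^j)`. -/
def uCond (i : Fin G.n) (j : ℕ) (a : ℕ) (β : G.Profile) (μ : G.Belief) : ℝ :=
  ∑ h ∈ G.Zset.filter (fun h => a ∈ h), G.u i h * G.nu i j β μ h

/-- The expected payoff `u^i(β)`. -/
def uExp (i : Fin G.n) (β : G.Profile) : ℝ := ∑ h ∈ G.Zset, G.u i h * G.omega β h

/-- The profile obtained from `β` by replacing all of player `i`'s components by `b`. -/
def replace (β : G.Profile) (i : Fin G.n) (b : ℕ → ℕ → ℝ) : G.Profile :=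
  fun p => if p = i then b else β p

/-- `β` is a Nash equilibrium in behavioral strategies. -/
def IsNash (β : G.Profile) : Prop :=
  G.IsBehProfile β ∧ ∀ (i : Fin G.n) (b : ℕ → ℕ → ℝ), G.IsBehStrategy i b →
    G.uExp i (G.replace β i b) ≤ G.uExp i β

/-- `(β, β̃, μ)` satisfies the Nash characterization (Definition 2 of the paper). -/
def NashChar (β βt : G.Profile) (μ : G.Belief) : Prop :=
  (∀ (i : Fin G.n) (j : ℕ), j < G.m i → ∀ a' ∈ G.infoA i j, ∀ a'' ∈ G.infoA i j,
    G.uWedgeAct i j a' (G.rho i j β βt) < G.uWedgeAct i j a'' (G.rho i j β βt) →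
    β i j a' = 0) ∧
  (∀ (i : Fin G.n) (j : ℕ), j < G.m i → ∀ a' ∈ G.infoA i j, ∀ a'' ∈ G.infoA i j,
    G.uCond i j a' (G.rho i j β βt) μ < G.uCond i j a'' (G.rho i j β βt) μ →
    βt i j a' = 0) ∧
  G.IsBelief μ ∧ G.SelfIndep β μ

/-- `r` is the root of a subgame: every information set lies entirely inside or entirely
outside the set of histories extending `r`. -/
def IsSubgameRoot (r : List ℕ) : Prop :=
  r ∈ G.H ∧ ∀ (i : Fin G.n) (j : ℕ), j < G.m i →
    (∀ h ∈ G.Info i j, r <+: h) ∨ ∀ h ∈ G.Info i j, ¬ r <+: h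

/-- The depth `g` of the smallest subgame containing `A(I_i^j)` (the length of the longest
subgame root preceding every history of `I_i^j`). -/
def sgDepthInfo (i : Fin G.n) (j : ℕ) : ℕ :=
  (G.H.filter fun r => G.IsSubgameRoot r ∧ ∀ h ∈ G.Info i j, r <+: h).sup List.length

/-- The depth `q(h)` of the smallest subgame containing the last action of `h`. -/
def sgDepthHist (h : List ℕ) : ℕ :=
  (G.H.filter fun r => G.IsSubgameRoot r ∧ r <+: h.dropLast).sup List.length

/-- `C^i_{I_i^j}(h|β)`: product of move probabilities along `h` within the smallest subgame
containing `A(I_i^j)`. -/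
def Ch (i : Fin G.n) (j : ℕ) (β : G.Profile) (h : List ℕ) : ℝ :=
  G.prodAlong β (h.take (G.sgDepthInfo i j)) (h.drop (G.sgDepthInfo i j))

/-- `C^i_{I_i^j}(I_i^j|β)`. -/
def CInfo (i : Fin G.n) (j : ℕ) (β : G.Profile) : ℝ := ∑ h ∈ G.Info i j, G.Ch i j β h

/-- `u^i((a, β^{-I_i^j}) ⋄ I_i^j)`. -/
def uDiamondAct (i : Fin G.n) (j : ℕ) (a : ℕ) (β : G.Profile) : ℝ :=
  ∑ h ∈ G.Zset.filter (fun h => a ∈ h), G.u i h *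
    G.prodAlongSkip i j β (h.take (G.sgDepthInfo i j)) (h.drop (G.sgDepthInfo i j))

/-- `Y^i(h|β)`: like `S^i(h|β)` but within the smallest subgame containing the last action
of `h`. -/
def Yh (i : Fin G.n) (β : G.Profile) (h : List ℕ) : ℝ :=
  G.prodAlongNot i β (h.take (G.sgDepthHist h)) (h.drop (G.sgDepthHist h))

/-- `Y^i(I_i^j|β)`. -/
def YInfo (i : Fin G.n) (j : ℕ) (β : G.Profile) : ℝ := ∑ h ∈ G.Info i j, G.Yh i β h

/-- The belief condition `Y^i(I_i^j|β) · μ^i_{I_i^j}(h) = Y^i(h|β)`. -/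
def YConsistent (β : G.Profile) (μ : G.Belief) : Prop :=
  ∀ (i : Fin G.n) (j : ℕ), j < G.m i → ∀ h ∈ G.Info i j,
    G.YInfo i j β * μ i j h = G.Yh i β h

/-- The expected payoff of player `i` in the subgame rooted at `r` (payoffs of terminal
histories extending `r`, weighted by the move probabilities within the subgame). -/
def uExpFrom (i : Fin G.n) (β : G.Profile) (r : List ℕ) : ℝ :=
  ∑ h ∈ G.Zset.filter (fun h => r <+: h), G.u i h * G.prodAlong β r (h.drop r.length)

/-- `β` is a subgame perfect equilibrium in behavioral strategies: its restriction to every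
subgame is a Nash equilibrium in behavioral strategies of that subgame. -/
def IsSubgamePerfect (β : G.Profile) : Prop :=
  G.IsBehProfile β ∧ ∀ r : List ℕ, G.IsSubgameRoot r →
    ∀ (i : Fin G.n) (b : ℕ → ℕ → ℝ), G.IsBehStrategy i b →
      G.uExpFrom i (G.replace β i b) r ≤ G.uExpFrom i β r

/-- `(β, β̃, μ)` satisfies the subgame perfect characterization (Definition 6 of the
paper). -/
def SubgameChar (β βt : G.Profile) (μ : G.Belief) : Prop :=
  (∀ (i : Fin G.n) (j : ℕ), j < G.m i → ∀ a' ∈ G.infoA i j, ∀ a'' ∈ G.infoA i j,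
    G.uDiamondAct i j a' (G.rho i j β βt) < G.uDiamondAct i j a'' (G.rho i j β βt) →
    β i j a' = 0) ∧
  (∀ (i : Fin G.n) (j : ℕ), j < G.m i → ∀ a' ∈ G.infoA i j, ∀ a'' ∈ G.infoA i j,
    G.uCond i j a' (G.rho i j β βt) μ < G.uCond i j a'' (G.rho i j β βt) μ →
    βt i j a' = 0) ∧
  G.IsBelief μ ∧ G.YConsistent β μ

/-- `(β, μ)` is a semi-sequential equilibrium. -/
def SemiSeqEq (β : G.Profile) (μ : G.Belief) : Prop :=
  G.IsBehProfile β ∧ G.IsBelief μ ∧ G.SelfIndep β μ ∧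
  ∀ (i : Fin G.n) (j : ℕ), j < G.m i → ∀ a' ∈ G.infoA i j, ∀ a'' ∈ G.infoA i j,
    G.uCond i j a' β μ < G.uCond i j a'' β μ → β i j a' = 0

/-- `(β, μ)` is a subgame perfect semi-sequential equilibrium. -/
def SubgameSemiSeqEq (β : G.Profile) (μ : G.Belief) : Prop :=
  G.IsBehProfile β ∧ G.IsBelief μ ∧ G.YConsistent β μ ∧
  ∀ (i : Fin G.n) (j : ℕ), j < G.m i → ∀ a' ∈ G.infoA i j, ∀ a'' ∈ G.infoA i j,
    G.uCond i j a' β μ < G.uCond i j a'' β μ → β i j a' = 0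

/-- `d(I_i^j)`: the number of information sets of player `i` containing a prefix of some
history of `I_i^j` (counting `I_i^j` itself). -/
def dInfo (i : Fin G.n) (j : ℕ) : ℕ :=
  ((Finset.range (G.m i)).filter
    (fun q => ∃ h ∈ G.Info i j, ∃ p : List ℕ, p <+: h ∧ p ∈ G.Info i q)).card

section Helpers

variable {G}

/-- Product of the probabilities of own moves in a record. -/
def own (b : ℕ → ℕ → ℝ) (l : List (ℕ × ℕ)) : ℝ := (l.map fun p => b p.1 p.2).prod

theorem own_append (b : ℕ → ℕ → ℝ) (l l' : List (ℕ × ℕ)) :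
    own b (l ++ l') = own b l * own b l' := by simp [own]

theorem own_cons (b : ℕ → ℕ → ℝ) (q c : ℕ) (l : List (ℕ × ℕ)) :
    own b ((q, c) :: l) = b q c * own b l := by simp [own]

theorem own_congr {b b' : ℕ → ℕ → ℝ} {l : List (ℕ × ℕ)}
    (h : ∀ p ∈ l, b p.1 p.2 = b' p.1 p.2) : own b l = own b' l := by
  unfold own
  rw [List.map_congr_left h]

theorem prodAlong_append (δ : G.Profile) (l l' pre : List ℕ) :
    G.prodAlong δ pre (l ++ l') = G.prodAlong δ pre l * G.prodAlong δ (pre ++ l) l' := by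
  induction l generalizing pre with
  | nil => simp [prodAlong]
  | cons c l ih => simp [prodAlong, ih, mul_assoc]

theorem prodAlongNot_append (i : Fin G.n) (δ : G.Profile) (l l' pre : List ℕ) :
    G.prodAlongNot i δ pre (l ++ l')
      = G.prodAlongNot i δ pre l * G.prodAlongNot i δ (pre ++ l) l' := by
  induction l generalizing pre with
  | nil => simp [prodAlongNot]
  | cons c l ih => simp only [List.cons_append, prodAlongNot, ih]; simp [mul_assoc]

theorem recordFrom_append (i : Fin G.n) (l l' pre : List ℕ) :
    G.recordFrom i pre (l ++ l') = G.recordFrom i pre l ++ G.recordFrom i (pre ++ l) l' := by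
  induction l generalizing pre with
  | nil => simp [recordFrom]
  | cons c l ih => simp only [List.cons_append, recordFrom, ih]; simp

theorem prodAlong_replace (β : G.Profile) (i : Fin G.n) (b : ℕ → ℕ → ℝ) (l pre : List ℕ) :
    G.prodAlong (G.replace β i b) pre l
      = G.prodAlongNot i β pre l * own b (G.recordFrom i pre l) := by
  induction l generalizing pre with
  | nil => simp [prodAlong, prodAlongNot, recordFrom, own]
  | cons c l ih =>
    simp only [prodAlong, prodAlongNot, recordFrom, ih, own_append]
    by_cases hp : G.P pre = some i
    · simp [hp, moveProb, replace, own]; ring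
    · have : G.moveProb (G.replace β i b) pre c = G.moveProb β pre c := by
        unfold moveProb
        cases hq : G.P pre with
        | none => rfl
        | some p =>
          have : p ≠ i := fun e => hp (by rw [hq, e])
          simp [replace, this]
      simp [hp, this, own]; ring

theorem replace_self (β : G.Profile) (i : Fin G.n) : G.replace β i (β i) = β := by
  funext p
  unfold replace
  split_ifs with h
  · rw [h]
  · rfl

theorem mem_record {i : Fin G.n} {q c : ℕ} {l pre : List ℕ}
    (h : (q, c) ∈ G.recordFrom i pre l) :
    ∃ l₁ l₂, l = l₁ ++ c :: l₂ ∧ G.P (pre ++ l₁) = some i ∧ G.infoIdx (pre ++ l₁) = q := by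
  induction l generalizing pre with
  | nil => simp [recordFrom] at h
  | cons d l ih =>
    simp only [recordFrom, List.mem_append] at h
    rcases h with h | h
    · split_ifs at h with hp
      · simp at h
        exact ⟨[], l, by simp [h.2], by simpa using hp, by simp [h.1]⟩
      · simp at h
    · obtain ⟨l₁, l₂, e, h1, h2⟩ := ih h
      exact ⟨d :: l₁, l₂, by simp [e], by simpa using h1, by simpa using h2⟩

theorem mem_infoA {i : Fin G.n} {j a : ℕ} :
    a ∈ G.infoA i j ↔ ∃ h ∈ G.Info i j, h ++ [a] ∈ G.H := by
  unfold infoA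
  rw [Finset.mem_sup]
  constructor
  · rintro ⟨h, hh, ha⟩
    exact ⟨h, hh, (Finset.mem_filter.1 ha).2⟩
  · rintro ⟨h, hh, ha⟩
    exact ⟨h, hh, Finset.mem_filter.2 ⟨G.act_mem h a ha, ha⟩⟩

theorem infoA_nonempty {i : Fin G.n} {j : ℕ} (hj : j < G.m i) : (G.infoA i j).Nonempty := by
  obtain ⟨h, hh⟩ := G.info_nonempty i j hj
  obtain ⟨-, -, ⟨a, ha⟩, -⟩ := (G.info_spec i j h hj).1 hh
  exact ⟨a, mem_infoA.2 ⟨h, hh, ha⟩⟩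

theorem mem_H_of_append {l l' : List ℕ} (h : l ++ l' ∈ G.H) : l ∈ G.H :=
  G.prefixClosed _ h _ (List.prefix_append _ _)

theorem mem_H_snoc {l l' : List ℕ} {a : ℕ} (h : l ++ a :: l' ∈ G.H) : l ++ [a] ∈ G.H :=
  G.prefixClosed _ h _ ⟨l', by simp⟩

theorem mem_info_idx {i : Fin G.n} {l l' : List ℕ} {a : ℕ} (h : l ++ a :: l' ∈ G.H)
    (hp : G.P l = some i) : G.infoIdx l < G.m i ∧ l ∈ G.Info i (G.infoIdx l) := by
  have h1 := mem_H_of_append h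
  have h2 := mem_H_snoc h
  have h3 := G.infoIdx_lt i l h1 hp ⟨a, h2⟩
  exact ⟨h3, (G.info_spec i _ l h3).2 ⟨h1, hp, ⟨a, h2⟩, rfl⟩⟩

theorem passes {i : Fin G.n} {j a : ℕ} (hj : j < G.m i) (ha : a ∈ G.infoA i j)
    {l l' : List ℕ} (hz : l ++ a :: l' ∈ G.H) : l ∈ G.Info i j := by
  obtain ⟨h, hh, hha⟩ := mem_infoA.1 ha
  have h2 := mem_H_snoc hz
  have h1 := mem_H_of_append hz
  obtain ⟨h3, h4, -, h5⟩ := (G.info_spec i j h hj).1 hh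
  obtain ⟨e1, e2⟩ := G.act_unique h l a h3 h1 hha h2
  exact (G.info_spec i j l hj).2 ⟨h1, by rw [← e1, h4], ⟨a, h2⟩, by rw [← e2, h5]⟩

/-- Level of an information set. -/
def lev (G : EFG) (i : Fin G.n) (j : ℕ) : ℕ :=
  (G.Info i j).sup fun h => (G.recordFrom i [] h).length

theorem lev_eq (hPR : G.PerfectRecall) {i : Fin G.n} {j : ℕ} (hj : j < G.m i) {h : List ℕ}
    (hh : h ∈ G.Info i j) : G.lev i j = (G.recordFrom i [] h).length := by
  unfold lev
  apply le_antisymm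
  · apply Finset.sup_le
    intro h' hh'
    rw [hPR i j hj h' hh' h hh]
  · exact Finset.le_sup (f := fun h => (G.recordFrom i [] h).length) hh

theorem record_P {i : Fin G.n} {j : ℕ} (hj : j < G.m i) {h : List ℕ} (hh : h ∈ G.Info i j) :
    G.P h = some i ∧ G.infoIdx h = j ∧ h ∈ G.H := by
  obtain ⟨h1, h2, h3, h4⟩ := (G.info_spec i j h hj).1 hh
  exact ⟨h2, h4, h1⟩

theorem lev_lt (hPR : G.PerfectRecall) {i : Fin G.n} {j q : ℕ} (hj : j < G.m i)
    (hq : q < G.m i) {h l : List ℕ} {a : ℕ}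
    (hh : h ∈ G.Info i j) (hl : h ++ a :: l ∈ G.Info i q) : G.lev i j < G.lev i q := by
  rw [lev_eq hPR hj hh, lev_eq hPR hq hl, recordFrom_append]
  simp [recordFrom, (record_P hj hh).1]

theorem no_nest (hPR : G.PerfectRecall) {i : Fin G.n} {j : ℕ} (hj : j < G.m i)
    {h h' : List ℕ} (hh : h ∈ G.Info i j) (hh' : h' ∈ G.Info i j) (hp : h <+: h') : h = h' := by
  obtain ⟨l, rfl⟩ := hp
  cases l with
  | nil => simp
  | cons a l => exact absurd (lev_lt hPR hj hj hh hh') (lt_irrefl _)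

theorem split_unique (hPR : G.PerfectRecall) {i : Fin G.n} {j : ℕ} (hj : j < G.m i)
    {h h' l l' : List ℕ} {a a' : ℕ} (hh : h ∈ G.Info i j) (hh' : h' ∈ G.Info i j)
    (e : h ++ a :: l = h' ++ a' :: l') : h = h' ∧ a = a' ∧ l = l' := by
  have hhh : h = h' := by
    rcases List.prefix_or_prefix_of_prefix (List.prefix_append h (a :: l))
      (e ▸ List.prefix_append h' (a' :: l')) with h1 | h1
    · exact no_nest hPR hj hh hh' h1
    · exact (no_nest hPR hj hh' hh h1).symm
  subst hhh
  simpa using e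

theorem nuAux_eq {i : Fin G.n} {j : ℕ} (δ : G.Profile) (w : List ℕ → ℝ)
    (l pre rest : List ℕ) (a : ℕ) (h : pre ++ l ∈ G.Info i j)
    (hn : ∀ l', l' <+: l → pre ++ l' ∈ G.Info i j → l' = l) :
    G.nuAux i j δ w pre (l ++ a :: rest)
      = w (pre ++ l) * G.prodAlong δ (pre ++ l ++ [a]) rest := by
  induction l generalizing pre with
  | nil =>
    have : pre ∈ G.Info i j := by simpa using h
    simp [nuAux, this]
  | cons c l ih =>
    have : pre ∉ G.Info i j := by
      intro h'
      have := hn [] (List.nil_prefix) (by simpa using h')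
      simp at this
    simp only [List.cons_append, nuAux, this, if_false]
    rw [ih (pre ++ [c]) (by simpa using h)]
    · simp
    · intro l' hl' hm
      have := hn (c :: l') (by simpa using hl') (by simpa using hm)
      simpa using this

theorem nu_eq (hPR : G.PerfectRecall) {i : Fin G.n} {j : ℕ} (hj : j < G.m i)
    (δ : G.Profile) (μ : G.Belief) {h : List ℕ} (rest : List ℕ) (a : ℕ)
    (hh : h ∈ G.Info i j) :
    G.nu i j δ μ (h ++ a :: rest) = μ i j h * G.prodAlong δ (h ++ [a]) rest := by
  unfold nu
  rw [nuAux_eq δ (μ i j) h [] rest a (by simpa using hh)]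
  · simp
  · intro l' hl' hm
    exact no_nest hPR hj (by simpa using hm) hh hl'

theorem prodAlong_congr {δ δ' : G.Profile} (l pre : List ℕ) (hH : pre ++ l ∈ G.H)
    (h : ∀ l₁ c, pre ++ l₁ ++ [c] ∈ G.H →
      G.moveProb δ (pre ++ l₁) c = G.moveProb δ' (pre ++ l₁) c) :
    G.prodAlong δ pre l = G.prodAlong δ' pre l := by
  induction l generalizing pre with
  | nil => rfl
  | cons c l ih =>
    simp only [prodAlong]
    rw [ih (pre ++ [c]) (by simpa using hH) (fun l₁ d hd => by
      have := h (c :: l₁) d (by simpa using hd)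
      simpa using this)]
    have := h [] c (by simpa using mem_H_snoc hH)
    simp at this
    rw [this]

theorem mem_Z_H {z : List ℕ} (hz : z ∈ G.Zset) : z ∈ G.H := (Finset.mem_filter.1 hz).1

theorem uCond_congr (hPR : G.PerfectRecall) {i : Fin G.n} {j a : ℕ} (hj : j < G.m i)
    (ha : a ∈ G.infoA i j) {δ δ' : G.Profile} (μ : G.Belief)
    (h : ∀ h ∈ G.Info i j, ∀ l c, h ++ a :: l ++ [c] ∈ G.H →
      G.moveProb δ (h ++ a :: l) c = G.moveProb δ' (h ++ a :: l) c) :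
    G.uCond i j a δ μ = G.uCond i j a δ' μ := by
  unfold uCond
  apply Finset.sum_congr rfl
  intro z hz
  obtain ⟨hz, haz⟩ := Finset.mem_filter.1 hz
  obtain ⟨l, l', rfl⟩ := List.append_of_mem haz
  have hl := passes hj ha (mem_Z_H hz)
  rw [nu_eq hPR hj _ _ _ _ hl, nu_eq hPR hj _ _ _ _ hl]
  rw [prodAlong_congr l' (l ++ [a]) (by simpa using mem_Z_H hz)]
  intro l₁ c hc
  have := h l hl l₁ c (by simpa using hc)
  simpa using this

theorem uCond_rho (hPR : G.PerfectRecall) {i : Fin G.n} {j a : ℕ} (hj : j < G.m i)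
    (ha : a ∈ G.infoA i j) (β βt : G.Profile) (μ : G.Belief) :
    G.uCond i j a (G.rho i j β βt) μ = G.uCond i j a (G.replace β i (βt i)) μ := by
  apply uCond_congr hPR hj ha
  intro h hh l c hc
  unfold moveProb
  cases hp : G.P (h ++ a :: l) with
  | none => rfl
  | some p =>
    simp only [Option.elim, rho, replace]
    by_cases hpi : p = i
    · subst hpi
      obtain ⟨h1, h2⟩ := mem_info_idx hc hp
      rw [if_pos ⟨rfl, _, h2, a, by simp, ha⟩, if_pos rfl]
    · simp [hpi]

theorem uCond_replace_congr (hPR : G.PerfectRecall) {i : Fin G.n} {j a : ℕ} (hj : j < G.m i)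
    (ha : a ∈ G.infoA i j) (β : G.Profile) (μ : G.Belief) {b b' : ℕ → ℕ → ℝ}
    (hb : ∀ q < G.m i, G.lev i j < G.lev i q → b q = b' q) :
    G.uCond i j a (G.replace β i b) μ = G.uCond i j a (G.replace β i b') μ := by
  apply uCond_congr hPR hj ha
  intro h hh l c hc
  unfold moveProb
  cases hp : G.P (h ++ a :: l) with
  | none => rfl
  | some p =>
    simp only [Option.elim, replace]
    by_cases hpi : p = i
    · subst hpi
      obtain ⟨h1, h2⟩ := mem_info_idx hc hp
      rw [if_pos rfl, if_pos rfl, hb _ h1 (lev_lt hPR hj h1 hh h2)]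
    · simp [hpi]

/-- Local optimality. -/
def LocOpt (A : Finset ℕ) (t U : ℕ → ℝ) : Prop :=
  ∀ a' ∈ A, ∀ a'' ∈ A, U a' < U a'' → t a' = 0

theorem locOpt_sum {A : Finset ℕ} {t b U : ℕ → ℝ} (ht : LocOpt A t U)
    (ht1 : ∑ a ∈ A, t a = 1) (hb : ∀ a ∈ A, 0 ≤ b a) (hb1 : ∑ a ∈ A, b a = 1) :
    ∑ a ∈ A, (b a - t a) * U a ≤ 0 ∧
    (∑ a ∈ A, (b a - t a) * U a = 0 ↔ LocOpt A b U) := by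
  have hne : A.Nonempty := by
    by_contra h
    rw [Finset.not_nonempty_iff_eq_empty] at h
    simp [h] at ht1
  obtain ⟨x, hx, hmax⟩ := Finset.exists_max_image A U hne
  have h1 : ∑ a ∈ A, t a * (U x - U a) = 0 := by
    apply Finset.sum_eq_zero
    intro a ha
    rcases (hmax a ha).lt_or_eq with h | h
    · rw [ht a ha x hx h, zero_mul]
    · rw [h, sub_self, mul_zero]
  have h2 : ∑ a ∈ A, (b a - t a) * U a = - ∑ a ∈ A, b a * (U x - U a) := by
    have e1 : ∑ a ∈ A, t a * (U x - U a) = U x - ∑ a ∈ A, t a * U a := by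
      simp only [mul_sub, Finset.sum_sub_distrib, ← Finset.sum_mul, ht1, one_mul]
    have e2 : ∑ a ∈ A, b a * (U x - U a) = U x - ∑ a ∈ A, b a * U a := by
      simp only [mul_sub, Finset.sum_sub_distrib, ← Finset.sum_mul, hb1, one_mul]
    simp only [sub_mul, Finset.sum_sub_distrib]
    linarith
  have h3 : ∀ a ∈ A, 0 ≤ b a * (U x - U a) := fun a ha =>
    mul_nonneg (hb a ha) (sub_nonneg.2 (hmax a ha))
  refine ⟨by rw [h2]; linarith [Finset.sum_nonneg h3], ?_⟩
  rw [h2, neg_eq_zero, Finset.sum_eq_zero_iff_of_nonneg h3]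
  constructor
  · intro h a' ha' a'' ha'' hlt
    rcases mul_eq_zero.1 (h a' ha') with h | h
    · exact h
    · linarith [hmax a'' ha'']
  · intro h a ha
    rcases (hmax a ha).lt_or_eq with h' | h'
    · rw [h a ha x hx h', zero_mul]
    · rw [h', sub_self, mul_zero]

/-- Others' reach weight from `r`. -/
def Wr (i : Fin G.n) (β : G.Profile) (r h : List ℕ) : ℝ :=
  G.prodAlongNot i β r (h.drop r.length)

/-- Others' reach weight of an information set. -/
def WrI (i : Fin G.n) (j : ℕ) (β : G.Profile) (r : List ℕ) : ℝ :=
  ∑ h ∈ G.Info i j, Wr i β r h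

/-- Own reach probability from `r`. -/
def ownR (i : Fin G.n) (b : ℕ → ℕ → ℝ) (r h : List ℕ) : ℝ :=
  own b (G.recordFrom i r (h.drop r.length))

theorem ownR_const (hPR : G.PerfectRecall) {i : Fin G.n} {j : ℕ} (hj : j < G.m i)
    (b : ℕ → ℕ → ℝ) {r h h' : List ℕ} (hh : h ∈ G.Info i j) (hh' : h' ∈ G.Info i j)
    (hr : r <+: h) (hr' : r <+: h') : ownR i b r h = ownR i b r h' := by
  obtain ⟨l, rfl⟩ := hr
  obtain ⟨l', rfl⟩ := hr'
  have := hPR i j hj _ hh _ hh'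
  rw [recordFrom_append, recordFrom_append] at this
  have := List.append_cancel_left this
  simp only [List.nil_append] at this
  simp [ownR, this]

/-- Own reach probability only depends on earlier components. -/
theorem ownR_congr (hPR : G.PerfectRecall) {i : Fin G.n} {j : ℕ} (hj : j < G.m i)
    {b b' : ℕ → ℕ → ℝ} {r h : List ℕ} (hh : h ∈ G.Info i j) (hr : r <+: h)
    (hb : ∀ q < G.m i, G.lev i q < G.lev i j → b q = b' q) :
    ownR i b r h = ownR i b' r h := by
  obtain ⟨l, rfl⟩ := hr
  unfold ownR
  apply own_congr
  rintro ⟨q, c⟩ hp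
  simp only [List.drop_left] at hp
  obtain ⟨l₁, l₂, rfl, h1, h2⟩ := mem_record hp
  have hH := (record_P hj hh).2.2
  rw [← List.append_assoc] at hH hh
  obtain ⟨h3, h4⟩ := mem_info_idx hH h1
  rw [h2] at h3 h4
  rw [hb q h3 (lev_lt hPR h3 hj h4 hh)]

/-- The step lemma. -/
theorem step (hPR : G.PerfectRecall) {i : Fin G.n} {j : ℕ} (hj : j < G.m i)
    (β : G.Profile) (μ : G.Belief) {r : List ℕ} (hrI : ∀ h ∈ G.Info i j, r <+: h)
    (hμ : ∀ h ∈ G.Info i j, Wr i β r h = WrI i j β r * μ i j h)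
    {b b' t : ℕ → ℕ → ℝ} (hbb : ∀ q, q ≠ j → b q = b' q)
    (hbt : ∀ q < G.m i, G.lev i j < G.lev i q → b q = t q)
    {h₀ : List ℕ} (hh₀ : h₀ ∈ G.Info i j) :
    G.uExpFrom i (G.replace β i b) r - G.uExpFrom i (G.replace β i b') r
      = ownR i b r h₀ * WrI i j β r *
        ∑ a ∈ G.infoA i j, (b j a - b' j a) * G.uCond i j a (G.replace β i t) μ := by
  have key : ∀ z ∈ G.Zset.filter (fun z => r <+: z),
      G.u i z * G.prodAlong (G.replace β i b) r (z.drop r.length)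
        - G.u i z * G.prodAlong (G.replace β i b') r (z.drop r.length)
      = ∑ a ∈ G.infoA i j, if a ∈ z then ownR i b r h₀ * WrI i j β r *
          ((b j a - b' j a) * (G.u i z * G.nu i j (G.replace β i t) μ z)) else 0 := by
    intro z hz
    obtain ⟨hz, hrz⟩ := Finset.mem_filter.1 hz
    have hzH := mem_Z_H hz
    by_cases hpass : ∃ a ∈ G.infoA i j, a ∈ z
    · obtain ⟨a, ha, haz⟩ := hpass
      obtain ⟨h, l, rfl⟩ := List.append_of_mem haz
      have hh := passes hj ha hzH
      have hPh := record_P hj hh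
      rw [Finset.sum_eq_single a]
      · rw [if_pos haz, nu_eq hPR hj _ _ _ _ hh, ownR_const hPR hj b hh₀ hh (hrI _ hh₀) (hrI _ hh),
          prodAlong_replace, prodAlong_replace, prodAlong_replace]
        obtain ⟨s, rfl⟩ := hrI _ hh
        have hW := hμ _ hh
        have hown := ownR_congr hPR hj (b := b) (b' := b') hh (hrI _ hh)
          (fun q _ hql => hbb q (by rintro rfl; exact lt_irrefl _ hql))
        simp only [Wr, ownR, List.drop_left] at hW hown ⊢
        have e1 : (r ++ s ++ a :: l).drop r.length = s ++ a :: l := by simp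
        have hnot : G.prodAlongNot i β r (s ++ a :: l)
            = G.prodAlongNot i β r s * G.prodAlongNot i β (r ++ s ++ [a]) l := by
          rw [prodAlongNot_append]
          simp [prodAlongNot, hPh.1]
        have hrec : G.recordFrom i r (s ++ a :: l)
            = G.recordFrom i r s ++ (j, a) :: G.recordFrom i (r ++ s ++ [a]) l := by
          rw [recordFrom_append]
          simp [recordFrom, hPh.1, hPh.2.1]
        have htail : ∀ q c, (q, c) ∈ G.recordFrom i (r ++ s ++ [a]) l →
            q < G.m i ∧ G.lev i j < G.lev i q := by
          intro q c hqc
          obtain ⟨l₁, l₂, rfl, h1, h2⟩ := mem_record hqc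
          have hzH' : (r ++ s ++ [a] ++ l₁) ++ c :: l₂ ∈ G.H := by simpa using hzH
          obtain ⟨h3, h4⟩ := mem_info_idx hzH' h1
          rw [h2] at h3 h4
          refine ⟨h3, lev_lt hPR hj h3 (h := r ++ s) (a := a) (l := l₁) hh (by simpa using h4)⟩
        have ht1 : own b (G.recordFrom i (r ++ s ++ [a]) l)
            = own t (G.recordFrom i (r ++ s ++ [a]) l) := by
          apply own_congr
          rintro ⟨q, c⟩ hqc
          obtain ⟨h3, h4⟩ := htail q c hqc
          rw [hbt q h3 h4]
        have ht2 : own b' (G.recordFrom i (r ++ s ++ [a]) l)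
            = own t (G.recordFrom i (r ++ s ++ [a]) l) := by
          rw [← ht1]
          apply own_congr
          rintro ⟨q, c⟩ hqc
          obtain ⟨h3, h4⟩ := htail q c hqc
          rw [hbb q (by rintro rfl; exact lt_irrefl _ h4)]
        rw [e1, hnot, hrec, own_append, own_append, own_cons, own_cons, ht1, ht2, ← hown, hW]
        ring
      · intro a' ha' hne
        rw [if_neg]
        intro ha'z
        obtain ⟨h', l', e⟩ := List.append_of_mem ha'z
        have hh' := passes hj ha' (e ▸ hzH)
        exact hne (split_unique hPR hj hh hh' e).2.1.symm
      · intro hna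
        exact absurd ha hna
    · push Not at hpass
      rw [Finset.sum_eq_zero (fun a ha => if_neg (hpass a ha))]
      rw [prodAlong_replace, prodAlong_replace, sub_eq_zero]
      congr 2
      apply own_congr
      rintro ⟨q, c⟩ hqc
      obtain ⟨l₁, l₂, e, h1, h2⟩ := mem_record hqc
      rw [hbb q]
      rintro rfl
      obtain ⟨s, rfl⟩ := hrz
      simp only [List.drop_left] at e
      subst e
      rw [← List.append_assoc] at hzH
      obtain ⟨h3, h4⟩ := mem_info_idx hzH h1
      rw [h2] at h4
      exact hpass c (mem_infoA.2 ⟨_, h4, mem_H_snoc hzH⟩) (by simp)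
  unfold uExpFrom
  rw [← Finset.sum_sub_distrib, Finset.sum_congr rfl key, Finset.sum_comm, Finset.mul_sum]
  apply Finset.sum_congr rfl
  intro a ha
  rw [← Finset.sum_filter, Finset.filter_filter]
  unfold uCond
  rw [Finset.mul_sum, Finset.mul_sum]
  apply Finset.sum_congr
  · apply Finset.filter_congr
    intro z hz
    constructor
    · exact fun h => h.2
    · intro haz
      refine ⟨?_, haz⟩
      obtain ⟨h, l, rfl⟩ := List.append_of_mem haz
      exact (hrI _ (passes hj ha (mem_Z_H hz))).trans (List.prefix_append _ _)
  · intros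
    rfl

theorem step_out {i : Fin G.n} {j : ℕ}
    (β : G.Profile) {r : List ℕ} (hrI : ∀ h ∈ G.Info i j, ¬ r <+: h)
    {b b' : ℕ → ℕ → ℝ} (hbb : ∀ q, q ≠ j → b q = b' q) :
    G.uExpFrom i (G.replace β i b) r = G.uExpFrom i (G.replace β i b') r := by
  unfold uExpFrom
  apply Finset.sum_congr rfl
  intro z hz
  obtain ⟨hz, hrz⟩ := Finset.mem_filter.1 hz
  have hzH := mem_Z_H hz
  obtain ⟨s, rfl⟩ := hrz
  simp only [List.drop_left]
  rw [prodAlong_replace, prodAlong_replace]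
  congr 2
  apply own_congr
  rintro ⟨q, c⟩ hqc
  obtain ⟨l₁, l₂, rfl, h1, h2⟩ := mem_record hqc
  rw [hbb q]
  rintro rfl
  rw [← List.append_assoc] at hzH
  obtain ⟨h3, h4⟩ := mem_info_idx hzH h1
  rw [h2] at h4
  exact hrI _ h4 (List.prefix_append _ _)

theorem moveProb_nonneg {β : G.Profile} (hβ : G.IsBehProfile β) {h : List ℕ} {c : ℕ}
    (hc : h ++ [c] ∈ G.H) : 0 ≤ G.moveProb β h c := by
  unfold moveProb
  cases hp : G.P h with
  | none => exact G.fc_nonneg h c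
  | some p =>
    obtain ⟨h1, h2⟩ := mem_info_idx hc hp
    exact (hβ p _ h1).1 c (mem_infoA.2 ⟨h, h2, hc⟩)

theorem prodAlong_nonneg {β : G.Profile} (hβ : G.IsBehProfile β) (l pre : List ℕ)
    (hH : pre ++ l ∈ G.H) : 0 ≤ G.prodAlong β pre l := by
  induction l generalizing pre with
  | nil => simp [prodAlong]
  | cons c l ih =>
    exact mul_nonneg (moveProb_nonneg hβ (mem_H_snoc hH)) (ih _ (by simpa using hH))

theorem prodAlongNot_nonneg {β : G.Profile} (hβ : G.IsBehProfile β) (i : Fin G.n)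
    (l pre : List ℕ) (hH : pre ++ l ∈ G.H) : 0 ≤ G.prodAlongNot i β pre l := by
  induction l generalizing pre with
  | nil => simp [prodAlongNot]
  | cons c l ih =>
    refine mul_nonneg ?_ (ih _ (by simpa using hH))
    split_ifs
    · exact zero_le_one
    · exact moveProb_nonneg hβ (mem_H_snoc hH)

theorem own_nonneg {i : Fin G.n} {b : ℕ → ℕ → ℝ} (hb : G.IsBehStrategy i b) {l pre : List ℕ}
    (hH : pre ++ l ∈ G.H) : 0 ≤ own b (G.recordFrom i pre l) := by
  unfold own
  apply List.prod_nonneg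
  intro x hx
  obtain ⟨⟨q, c⟩, hp, rfl⟩ := List.mem_map.1 hx
  obtain ⟨l₁, l₂, rfl, h1, h2⟩ := mem_record hp
  rw [← List.append_assoc] at hH
  obtain ⟨h3, h4⟩ := mem_info_idx hH h1
  rw [h2] at h3 h4
  exact (hb q h3).1 c (mem_infoA.2 ⟨_, h4, mem_H_snoc hH⟩)

theorem ownR_nonneg {i : Fin G.n} {j : ℕ} (hj : j < G.m i) {b : ℕ → ℕ → ℝ}
    (hb : G.IsBehStrategy i b) {r h : List ℕ} (hh : h ∈ G.Info i j) (hr : r <+: h) :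
    0 ≤ ownR i b r h := by
  obtain ⟨l, rfl⟩ := hr
  unfold ownR
  rw [List.drop_left]
  exact own_nonneg hb (record_P hj hh).2.2

theorem WrI_nonneg {β : G.Profile} (hβ : G.IsBehProfile β) {i : Fin G.n} {j : ℕ}
    (hj : j < G.m i) {r : List ℕ} (hr : ∀ h ∈ G.Info i j, r <+: h) : 0 ≤ WrI i j β r := by
  apply Finset.sum_nonneg
  intro h hh
  obtain ⟨l, rfl⟩ := hr h hh
  unfold Wr
  rw [List.drop_left]
  exact prodAlongNot_nonneg hβ i _ _ (record_P hj hh).2.2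

/-- The smallest subgame root of an information set. -/
theorem exists_root (i : Fin G.n) (j : ℕ) :
    ∃ r, G.IsSubgameRoot r ∧ (∀ h ∈ G.Info i j, r <+: h) ∧ r.length = G.sgDepthInfo i j ∧
      ∀ r', G.IsSubgameRoot r' → (∀ h ∈ G.Info i j, r' <+: h) → r'.length ≤ r.length := by
  have hne : (G.H.filter fun r => G.IsSubgameRoot r ∧ ∀ h ∈ G.Info i j, r <+: h).Nonempty :=
    ⟨[], Finset.mem_filter.2 ⟨G.empty_mem,
      ⟨G.empty_mem, fun _ _ _ => Or.inl fun _ _ => List.nil_prefix⟩,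
      fun _ _ => List.nil_prefix⟩⟩
  obtain ⟨r, hr, e⟩ := Finset.exists_mem_eq_sup _ hne List.length
  obtain ⟨h1, h2, h3⟩ := Finset.mem_filter.1 hr
  refine ⟨r, h2, h3, e.symm, ?_⟩
  intro r' hr' hr'I
  rw [← e]
  exact Finset.le_sup (f := List.length) (Finset.mem_filter.2 ⟨hr'.1, hr', hr'I⟩)

theorem sgDepthHist_eq (hPR : G.PerfectRecall) {i : Fin G.n} {j : ℕ} (hj : j < G.m i)
    {h h' : List ℕ} (hh : h ∈ G.Info i j) (hh' : h' ∈ G.Info i j) (hne : h ≠ h') :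
    G.sgDepthHist h = G.sgDepthInfo i j := by
  unfold sgDepthHist sgDepthInfo
  congr 1
  apply Finset.filter_congr
  intro r _
  apply and_congr_right
  intro hr
  constructor
  · intro hp
    rcases hr.2 i j hj with h1 | h1
    · exact h1
    · exact absurd (hp.trans (List.dropLast_prefix h)) (h1 h hh)
  · intro hall
    have h1 := hall h hh
    have h2 : r ≠ h := by
      rintro rfl
      exact hne (no_nest hPR hj hh hh' (hall h' hh'))
    obtain ⟨l, rfl⟩ := h1
    have : l ≠ [] := by rintro rfl; simp at h2
    rw [List.dropLast_append_of_ne_nil this]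
    exact List.prefix_append _ _

theorem Wr_trans (i : Fin G.n) (β : G.Profile) {r s h : List ℕ} (h1 : r <+: s) (h2 : s <+: h) :
    Wr i β r h = Wr i β r s * G.prodAlongNot i β (h.take s.length) (h.drop s.length) := by
  obtain ⟨l, rfl⟩ := h1
  obtain ⟨l', rfl⟩ := h2
  unfold Wr
  rw [List.drop_left, List.drop_left, List.take_left, List.append_assoc, List.drop_left,
    prodAlongNot_append]

theorem belief_consistent (hPR : G.PerfectRecall) {β : G.Profile} {μ : G.Belief}
    (hμ : G.IsBelief μ) (hY : G.YConsistent β μ) {i : Fin G.n} {j : ℕ} (hj : j < G.m i)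
    {r : List ℕ} (hr : G.IsSubgameRoot r) (hrI : ∀ h ∈ G.Info i j, r <+: h) :
    ∀ h ∈ G.Info i j, Wr i β r h = WrI i j β r * μ i j h := by
  intro h hh
  by_cases hs : ∀ h' ∈ G.Info i j, h' = h
  · have e : G.Info i j = {h} := Finset.eq_singleton_iff_unique_mem.2 ⟨hh, hs⟩
    have h1 := (hμ i j hj).2
    rw [e, Finset.sum_singleton] at h1
    rw [WrI, e, Finset.sum_singleton, h1, mul_one]
  · push Not at hs
    obtain ⟨h₁, hh₁, hne₁⟩ := hs
    obtain ⟨s, hs1, hs2, hs3, hs4⟩ := exists_root i j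
    have hrs : r <+: s :=
      List.prefix_of_prefix_length_le (hrI h hh) (hs2 h hh) (hs4 r hr hrI)
    have hYh : ∀ h' ∈ G.Info i j, Wr i β r h' = Wr i β r s * G.Yh i β h' := by
      intro h' hh'
      have : G.sgDepthHist h' = s.length := by
        rw [hs3]
        by_cases e : h' = h
        · subst e; exact sgDepthHist_eq hPR hj hh' hh₁ hne₁.symm
        · exact sgDepthHist_eq hPR hj hh' hh e
      rw [Wr_trans i β hrs (hs2 h' hh'), Yh, this]
    have hI : WrI i j β r = Wr i β r s * G.YInfo i j β := by
      unfold WrI YInfo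
      rw [Finset.mul_sum]
      exact Finset.sum_congr rfl hYh
    rw [hI, hYh h hh, ← hY i j hj h hh, mul_assoc]

theorem reach_eq (hPR : G.PerfectRecall) (β : G.Profile) {i : Fin G.n} {j : ℕ} (hj : j < G.m i)
    {r : List ℕ} (hrI : ∀ h ∈ G.Info i j, r <+: h) {h₀ : List ℕ} (hh₀ : h₀ ∈ G.Info i j) :
    ownR i (β i) r h₀ * WrI i j β r
      = ∑ h ∈ G.Info i j, G.prodAlong β r (h.drop r.length) := by
  unfold WrI
  rw [Finset.mul_sum]
  apply Finset.sum_congr rfl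
  intro h hh
  have := prodAlong_replace β i (β i) (h.drop r.length) r
  rw [replace_self] at this
  rw [this, ownR_const hPR hj (β i) hh₀ hh (hrI _ hh₀) (hrI _ hh)]
  unfold Wr ownR
  ring

theorem Ch_eq (β : G.Profile) {i : Fin G.n} {j : ℕ} {s : List ℕ}
    (hs3 : s.length = G.sgDepthInfo i j) {h : List ℕ} (hs : s <+: h) :
    G.Ch i j β h = G.prodAlong β s (h.drop s.length) := by
  obtain ⟨l, rfl⟩ := hs
  unfold Ch
  rw [← hs3, List.take_left]

theorem CInfo_pos_of_reach {β : G.Profile} (hβ : G.IsBehProfile β)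
    {i : Fin G.n} {j : ℕ} (hj : j < G.m i)
    {r : List ℕ} (hr : G.IsSubgameRoot r) (hrI : ∀ h ∈ G.Info i j, r <+: h)
    (hne : ∑ h ∈ G.Info i j, G.prodAlong β r (h.drop r.length) ≠ 0) : 0 < G.CInfo i j β := by
  obtain ⟨h, hh, hh0⟩ := Finset.exists_ne_zero_of_sum_ne_zero hne
  obtain ⟨s, hs1, hs2, hs3, hs4⟩ := exists_root i j
  have hrs : r <+: s :=
    List.prefix_of_prefix_length_le (hrI h hh) (hs2 h hh) (hs4 r hr hrI)
  have hnn : ∀ h ∈ G.Info i j, 0 ≤ G.Ch i j β h := by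
    intro h hh
    rw [Ch_eq β hs3 (hs2 h hh)]
    obtain ⟨l, rfl⟩ := hs2 h hh
    rw [List.drop_left]
    exact prodAlong_nonneg hβ _ _ (record_P hj hh).2.2
  have hle := Finset.single_le_sum hnn hh
  refine lt_of_lt_of_le (lt_of_le_of_ne (hnn h hh) (Ne.symm ?_)) hle
  rw [Ch_eq β hs3 (hs2 h hh)]
  obtain ⟨l, rfl⟩ := hrs
  obtain ⟨l', rfl⟩ := hs2 h hh
  rw [List.append_assoc, List.drop_left, prodAlong_append] at hh0
  rw [List.drop_left]
  exact right_ne_zero_of_mul hh0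

/-- Play `b` on `S` and `t` elsewhere. -/
def hyb (b t : ℕ → ℕ → ℝ) (S : Finset ℕ) : ℕ → ℕ → ℝ := fun q => if q ∈ S then b q else t q

theorem hyb_beh {i : Fin G.n} {b t : ℕ → ℕ → ℝ} (hb : G.IsBehStrategy i b)
    (ht : G.IsBehStrategy i t) (S : Finset ℕ) : G.IsBehStrategy i (hyb b t S) := by
  intro j hj
  unfold hyb
  split_ifs
  · exact hb j hj
  · exact ht j hj

/-- Sequential rationality of `t` (condition (ii)) for player `i`. -/
def SeqOpt (β : G.Profile) (μ : G.Belief) (i : Fin G.n) (t : ℕ → ℕ → ℝ) (j : ℕ) : Prop :=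
  LocOpt (G.infoA i j) (t j) fun a => G.uCond i j a (G.replace β i t) μ

/-- Difference when one information set of maximal level is inserted. -/
theorem hyb_step (hPR : G.PerfectRecall) {β : G.Profile} {μ : G.Belief}
    (hμ : G.IsBelief μ) (hY : G.YConsistent β μ) {i : Fin G.n} {j : ℕ} (hj : j < G.m i)
    {r : List ℕ} (hr : G.IsSubgameRoot r) (hrI : ∀ h ∈ G.Info i j, r <+: h)
    (b t : ℕ → ℕ → ℝ) {S : Finset ℕ} (hjS : j ∉ S) (hS : ∀ q ∈ S, G.lev i q ≤ G.lev i j)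
    {h₀ : List ℕ} (hh₀ : h₀ ∈ G.Info i j) :
    G.uExpFrom i (G.replace β i (hyb b t (insert j S))) r
      - G.uExpFrom i (G.replace β i (hyb b t S)) r
      = ownR i (hyb b t (insert j S)) r h₀ * WrI i j β r *
        ∑ a ∈ G.infoA i j, (b j a - t j a) * G.uCond i j a (G.replace β i t) μ := by
  rw [step hPR hj β μ hrI (belief_consistent hPR hμ hY hj hr hrI) (t := t) _ _ hh₀]
  · simp [hyb, hjS]
  · intro q hq
    simp [hyb, hq]
  · intro q _ hq
    have h1 : q ≠ j := by rintro rfl; exact lt_irrefl _ hq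
    have h2 : q ∉ S := fun h => absurd (hS q h) (not_le.2 hq)
    simp [hyb, h1, h2]

theorem hyb_le (hPR : G.PerfectRecall) {β : G.Profile} (hβ : G.IsBehProfile β) {μ : G.Belief}
    (hμ : G.IsBelief μ) (hY : G.YConsistent β μ) {i : Fin G.n}
    {r : List ℕ} (hr : G.IsSubgameRoot r)
    {b t : ℕ → ℕ → ℝ} (hb : G.IsBehStrategy i b) (ht : G.IsBehStrategy i t)
    (hopt : ∀ j < G.m i, SeqOpt β μ i t j) (S₁ : Finset ℕ) (S : Finset ℕ)
    (hSm : ∀ q ∈ S, q < G.m i) (hdis : ∀ q ∈ S, q ∉ S₁)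
    (hlev : ∀ q ∈ S, ∀ p ∈ S₁, G.lev i p ≤ G.lev i q) :
    G.uExpFrom i (G.replace β i (hyb b t (S ∪ S₁))) r
      ≤ G.uExpFrom i (G.replace β i (hyb b t S₁)) r := by
  induction S using Finset.induction_on_max_value (G.lev i) with
  | empty => simp
  | insert j S hjS hmax ih =>
    refine le_trans ?_ (ih (fun q hq => hSm q (by simp [hq])) (fun q hq => hdis q (by simp [hq]))
      (fun q hq => hlev q (by simp [hq])))
    have hj := hSm j (by simp)
    have hj1 : j ∉ S ∪ S₁ := by
      simp only [Finset.mem_union, not_or]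
      exact ⟨hjS, hdis j (by simp)⟩
    rw [Finset.insert_union]
    rcases hr.2 i j hj with hrI | hrI
    · obtain ⟨h₀, hh₀⟩ := G.info_nonempty i j hj
      have e := hyb_step hPR hμ hY hj hr hrI b t hj1 (by
        intro q hq
        rcases Finset.mem_union.1 hq with hq | hq
        · exact hmax q hq
        · exact hlev j (by simp) q hq) hh₀
      have h1 := (locOpt_sum (hopt j hj) (ht j hj).2 (hb j hj).1 (hb j hj).2).1
      have h2 := mul_nonneg (ownR_nonneg hj (hyb_beh hb ht (insert j (S ∪ S₁))) hh₀ (hrI _ hh₀))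
        (WrI_nonneg hβ hj hrI)
      have := mul_nonpos_of_nonneg_of_nonpos h2 h1
      linarith
    · exact (step_out β hrI (fun q hq => by simp [hyb, hq])).le

theorem hyb_eq (hPR : G.PerfectRecall) {β : G.Profile} (hβ : G.IsBehProfile β) {μ : G.Belief}
    (hμ : G.IsBelief μ) (hY : G.YConsistent β μ) {i : Fin G.n}
    {r : List ℕ} (hr : G.IsSubgameRoot r)
    {t : ℕ → ℕ → ℝ} (ht : G.IsBehStrategy i t)
    (hopt : ∀ j < G.m i, SeqOpt β μ i t j)
    (hoptβ : ∀ j < G.m i, 0 < G.CInfo i j β →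
      LocOpt (G.infoA i j) (β i j) fun a => G.uCond i j a (G.replace β i t) μ)
    (S : Finset ℕ) (hSm : ∀ q ∈ S, q < G.m i)
    (hcl : ∀ q ∈ S, ∀ p < G.m i, G.lev i p < G.lev i q → p ∈ S) :
    G.uExpFrom i (G.replace β i (hyb (β i) t S)) r
      = G.uExpFrom i (G.replace β i t) r := by
  induction S using Finset.induction_on_max_value (G.lev i) with
  | empty =>
    have : hyb (β i) t ∅ = t := by funext q; simp [hyb]
    rw [this]
  | insert j S hjS hmax ih =>
    rw [← ih (fun q hq => hSm q (by simp [hq])) (fun q hq p hp hpq => by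
      rcases Finset.mem_insert.1 (hcl q (by simp [hq]) p hp hpq) with h | h
      · subst h
        exact absurd (hmax q hq) (not_le.2 hpq)
      · exact h)]
    have hj := hSm j (by simp)
    rcases hr.2 i j hj with hrI | hrI
    · obtain ⟨h₀, hh₀⟩ := G.info_nonempty i j hj
      have e := hyb_step hPR hμ hY hj hr hrI (β i) t hjS hmax hh₀
      rw [← sub_eq_zero, e]
      have e2 : ownR i (hyb (β i) t (insert j S)) r h₀ = ownR i (β i) r h₀ := by
        apply ownR_congr hPR hj hh₀ (hrI _ hh₀)
        intro q hq hql
        simp only [hyb, if_pos (hcl j (by simp) q hq hql)]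
      rw [e2, reach_eq hPR β hj hrI hh₀]
      by_cases h0 : ∑ h ∈ G.Info i j, G.prodAlong β r (h.drop r.length) = 0
      · rw [h0, zero_mul]
      · have hC := CInfo_pos_of_reach hβ hj hr hrI h0
        rw [((locOpt_sum (hopt j hj) (ht j hj).2 (hβ i j hj).1 (hβ i j hj).2).2).2
          (hoptβ j hj hC), mul_zero]
    · exact step_out β hrI (fun q hq => by simp [hyb, hq])

/-- Payoffs only depend on the proper components. -/
theorem uExpFrom_congr (β : G.Profile) {i : Fin G.n} {r : List ℕ} {b b' : ℕ → ℕ → ℝ}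
    (h : ∀ q < G.m i, b q = b' q) :
    G.uExpFrom i (G.replace β i b) r = G.uExpFrom i (G.replace β i b') r := by
  unfold uExpFrom
  apply Finset.sum_congr rfl
  intro z hz
  obtain ⟨hz, hrz⟩ := Finset.mem_filter.1 hz
  have hzH := mem_Z_H hz
  obtain ⟨s, rfl⟩ := hrz
  simp only [List.drop_left]
  rw [prodAlong_replace, prodAlong_replace]
  congr 2
  apply own_congr
  rintro ⟨q, c⟩ hqc
  obtain ⟨l₁, l₂, rfl, h1, h2⟩ := mem_record hqc
  rw [← List.append_assoc] at hzH
  obtain ⟨h3, h4⟩ := mem_info_idx hzH h1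
  rw [h2] at h3
  rw [h q h3]

/-- Existence of a sequentially rational strategy, by backward induction. -/
theorem exists_seqOpt (hPR : G.PerfectRecall) {β : G.Profile} (hβ : G.IsBehProfile β)
    (μ : G.Belief) (i : Fin G.n) (S : Finset ℕ) (hS : ∀ q ∈ S, q < G.m i) :
    ∃ t, G.IsBehStrategy i t ∧ ∀ j ∈ S, SeqOpt β μ i t j := by
  induction S using Finset.induction_on_min_value (G.lev i) with
  | empty => exact ⟨β i, hβ i, by simp⟩
  | insert j S hjS hmin ih =>
    obtain ⟨t, ht, hopt⟩ := ih (fun q hq => hS q (by simp [hq]))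
    have hj := hS j (by simp)
    obtain ⟨x, hx, hmax⟩ := Finset.exists_max_image (G.infoA i j)
      (fun a => G.uCond i j a (G.replace β i t) μ) (infoA_nonempty hj)
    let t' : ℕ → ℕ → ℝ := Function.update t j (fun a => if a = x then 1 else 0)
    have hcong : ∀ k < G.m i, G.lev i j ≤ G.lev i k → ∀ a ∈ G.infoA i k,
        G.uCond i k a (G.replace β i t') μ = G.uCond i k a (G.replace β i t) μ := by
      intro k hk hjk a ha
      apply uCond_replace_congr hPR hk ha
      intro q _ hq
      have : q ≠ j := by rintro rfl; omega
      simp [t', this]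
    refine ⟨t', ?_, ?_⟩
    · intro k hk
      by_cases hkj : k = j
      · subst hkj
        simp only [t', Function.update_self]
        refine ⟨fun a _ => by split_ifs <;> norm_num, ?_⟩
        simp [hx]
      · simp only [t', Function.update_of_ne hkj]
        exact ht k hk
    · intro k hk a' ha' a'' ha'' hlt
      have hk' := hS k hk
      rcases Finset.mem_insert.1 hk with rfl | hkS
      · simp only [hcong k hk' le_rfl a' ha', hcong k hk' le_rfl a'' ha''] at hlt
        have : a' ≠ x := by
          rintro rfl
          exact absurd (hmax a'' ha'') (not_le.2 hlt)
        simp [t', this]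
      · have hkj : k ≠ j := by rintro rfl; exact hjS hkS
        simp only [hcong k hk' (hmin k hkS) a' ha', hcong k hk' (hmin k hkS) a'' ha''] at hlt
        simp only [t', Function.update_of_ne hkj]
        exact hopt k hkS a' ha' a'' ha'' hlt

theorem exists_belief {β : G.Profile} (hβ : G.IsBehProfile β) :
    ∃ μ : G.Belief, G.IsBelief μ ∧ G.YConsistent β μ := by
  have hYnn : ∀ (i : Fin G.n) (j : ℕ), j < G.m i → ∀ h ∈ G.Info i j, 0 ≤ G.Yh i β h := by
    intro i j hj h hh
    unfold Yh
    apply prodAlongNot_nonneg hβ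
    rw [List.take_append_drop]
    exact (record_P hj hh).2.2
  refine ⟨fun i j h => if G.YInfo i j β = 0 then ((G.Info i j).card : ℝ)⁻¹
    else G.Yh i β h / G.YInfo i j β, ?_, ?_⟩
  · intro i j hj
    constructor
    · intro h hh
      dsimp only
      split_ifs
      · positivity
      · exact div_nonneg (hYnn i j hj h hh) (Finset.sum_nonneg (hYnn i j hj))
    · dsimp only
      split_ifs with h0
      · have : ((G.Info i j).card : ℝ) ≠ 0 := by
          exact_mod_cast (Finset.card_pos.2 (G.info_nonempty i j hj)).ne'
        simp [this]
      · rw [← Finset.sum_div]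
        exact div_self h0
  · intro i j hj h hh
    dsimp only
    split_ifs with h0
    · rw [h0, zero_mul]
      exact ((Finset.sum_eq_zero_iff_of_nonneg (hYnn i j hj)).1 h0 h hh).symm
    · field_simp

end Helpers

end EFG

/-- Definition 7 (characterization of subgame perfect equilibrium under conditional
expected payoffs): `β*` is a subgame perfect equilibrium in behavioral strategies iff there
exist `β̃*` and a belief system `μ*` satisfying the stated local rationality and
consistency conditions, with the condition on `β*` imposed only where
`C^i_{I_i^j}(I_i^j|β*) > 0`. -/
theorem stmt12 (G : EFG) (hPR : G.PerfectRecall) (β : G.Profile) (hβ : G.IsBehProfile β) :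
    G.IsSubgamePerfect β ↔
      ∃ (βt : G.Profile) (μ : G.Belief), G.IsBehProfile βt ∧
        (∀ (i : Fin G.n) (j : ℕ), j < G.m i → ∀ a' ∈ G.infoA i j, ∀ a'' ∈ G.infoA i j,
          0 < G.CInfo i j β →
          G.uCond i j a' (G.rho i j β βt) μ < G.uCond i j a'' (G.rho i j β βt) μ →
          β i j a' = 0) ∧
        (∀ (i : Fin G.n) (j : ℕ), j < G.m i → ∀ a' ∈ G.infoA i j, ∀ a'' ∈ G.infoA i j,
          G.uCond i j a' (G.rho i j β βt) μ < G.uCond i j a'' (G.rho i j β βt) μ →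
          βt i j a' = 0) ∧
        G.IsBelief μ ∧ G.YConsistent β μ := by
  constructor
  · intro hSPE
    obtain ⟨μ, hμ, hY⟩ := EFG.exists_belief hβ
    have hex := fun i => EFG.exists_seqOpt hPR hβ μ i (Finset.range (G.m i))
      (fun q hq => Finset.mem_range.1 hq)
    choose βt hβt hopt' using hex
    have hopt : ∀ i, ∀ j < G.m i, EFG.SeqOpt β μ i (βt i) j :=
      fun i j hj => hopt' i j (Finset.mem_range.2 hj)
    refine ⟨βt, μ, hβt, ?_, ?_, hμ, hY⟩
    · intro i j hj a' ha' a'' ha'' hC hlt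
      rw [EFG.uCond_rho hPR hj ha', EFG.uCond_rho hPR hj ha''] at hlt
      obtain ⟨r, hr, hrI, hr3, -⟩ := EFG.exists_root (G := G) i j
      obtain ⟨h₀, hh₀⟩ := G.info_nonempty i j hj
      let S₀ : Finset ℕ := (Finset.range (G.m i)).filter fun q => G.lev i q < G.lev i j
      have hjS : j ∉ S₀ := by simp [S₀]
      have hS₀ : ∀ q ∈ S₀, G.lev i q < G.lev i j := fun q hq => (Finset.mem_filter.1 hq).2
      have e := EFG.hyb_step hPR hμ hY hj hr hrI (β i) (βt i) hjS
        (fun q hq => (hS₀ q hq).le) hh₀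
      have e2 : EFG.ownR i (EFG.hyb (β i) (βt i) (insert j S₀)) r h₀
          = EFG.ownR i (β i) r h₀ := by
        apply EFG.ownR_congr hPR hj hh₀ (hrI _ hh₀)
        intro q hq hql
        have : q ∈ S₀ := Finset.mem_filter.2 ⟨Finset.mem_range.2 hq, hql⟩
        simp [EFG.hyb, this]
      have e3 : ∑ h ∈ G.Info i j, G.prodAlong β r (h.drop r.length) = G.CInfo i j β :=
        Finset.sum_congr rfl fun h hh => (EFG.Ch_eq β hr3 (hrI h hh)).symm
      rw [e2, EFG.reach_eq hPR β hj hrI hh₀, e3] at e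
      have f1 := EFG.hyb_le hPR hβ hμ hY hr (hβ i) (hβt i) (hopt i) (insert j S₀)
        (Finset.range (G.m i) \ insert j S₀)
        (fun q hq => Finset.mem_range.1 (Finset.mem_sdiff.1 hq).1)
        (fun q hq => (Finset.mem_sdiff.1 hq).2)
        (by
          intro q hq p hp
          obtain ⟨h1, h2⟩ := Finset.mem_sdiff.1 hq
          have h3 : G.lev i j ≤ G.lev i q := by
            by_contra h
            exact h2 (Finset.mem_insert_of_mem (Finset.mem_filter.2 ⟨h1, not_le.1 h⟩))
          rcases Finset.mem_insert.1 hp with rfl | hp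
          · exact h3
          · exact (hS₀ p hp).le.trans h3)
      have f2 := hSPE.2 r hr i _ (EFG.hyb_beh (hβ i) (hβt i) S₀)
      have f3 : G.uExpFrom i (G.replace β i (EFG.hyb (β i) (βt i)
          ((Finset.range (G.m i) \ insert j S₀) ∪ insert j S₀))) r = G.uExpFrom i β r := by
        conv_rhs => rw [← EFG.replace_self β i]
        apply EFG.uExpFrom_congr
        intro q hq
        have : q ∈ (Finset.range (G.m i) \ insert j S₀) ∪ insert j S₀ := by
          rw [Finset.sdiff_union_self_eq_union]
          exact Finset.mem_union_left _ (Finset.mem_range.2 hq)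
        simp only [EFG.hyb, if_pos this]
      obtain ⟨g1, g2⟩ := EFG.locOpt_sum (hopt i j hj) (hβt i j hj).2 (hβ i j hj).1 (hβ i j hj).2
      refine g2.1 (le_antisymm g1 ?_) a' ha' a'' ha'' hlt
      by_contra hneg
      have := mul_neg_of_pos_of_neg hC (not_le.1 hneg)
      linarith
    · intro i j hj a' ha' a'' ha'' hlt
      rw [EFG.uCond_rho hPR hj ha', EFG.uCond_rho hPR hj ha''] at hlt
      exact hopt i j hj a' ha' a'' ha'' hlt
  · rintro ⟨βt, μ, hβt, h1, h2, hμ, hY⟩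
    refine ⟨hβ, ?_⟩
    intro r hr i b hb
    have hopt : ∀ j < G.m i, EFG.SeqOpt β μ i (βt i) j := by
      intro j hj a' ha' a'' ha'' hlt
      apply h2 i j hj a' ha' a'' ha''
      rw [EFG.uCond_rho hPR hj ha', EFG.uCond_rho hPR hj ha'']
      exact hlt
    have f1 := EFG.hyb_le hPR hβ hμ hY hr hb (hβt i) hopt ∅ (Finset.range (G.m i))
      (fun q hq => Finset.mem_range.1 hq) (by simp) (by simp)
    have f2 := EFG.hyb_eq hPR hβ hμ hY hr (hβt i) hopt
      (by
        intro j hj hC a' ha' a'' ha'' hlt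
        apply h1 i j hj a' ha' a'' ha'' hC
        rw [EFG.uCond_rho hPR hj ha', EFG.uCond_rho hPR hj ha'']
        exact hlt) (Finset.range (G.m i)) (fun q hq => Finset.mem_range.1 hq)
      (fun q _ p hp _ => Finset.mem_range.2 hp)
    have f3 : G.uExpFrom i (G.replace β i (EFG.hyb b (βt i) (Finset.range (G.m i) ∪ ∅))) r
        = G.uExpFrom i (G.replace β i b) r :=
      EFG.uExpFrom_congr β fun q hq => by simp [EFG.hyb, hq]
    have f4 : G.uExpFrom i (G.replace β i (EFG.hyb (β i) (βt i) (Finset.range (G.m i)))) r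
        = G.uExpFrom i β r := by
      conv_rhs => rw [← EFG.replace_self β i]
      exact EFG.uExpFrom_congr β fun q hq => by simp [EFG.hyb, hq]
    have f5 : EFG.hyb b (βt i) ∅ = βt i := by funext q; simp [EFG.hyb]
    rw [f3, f5, ← f2, f4] at f1
    exact f1
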